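/- Suppose the LP relaxation of maximum weight matching on G is pointed, i.e. it has a unique half-integral optimum x* whose weight exceeds that of every other half-integral feasible point by some ε > 0. Let (α, m, γ) be a fixed point of the natural dynamics. Then every 1-solid edge (x*_e = 1) is strong-dotted (w_{ij} − α_{i→j} − α_{j→i} > 0), and every ½-solid edge (x*_e = 1/2) is weak-dotted (w_{ij} − α_{i→j} − α_{j→i} = 0). -/

import Mathlib

open Finset Filter Topology

/-- The offer `m_{i→j}` computed from message vector `α`:
`m_{i→j} = (w_{ij} − α_{i→j})₊ − (1/2)(w_{ij} − α_{i→j} − α_{j→i})₊`. -/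
noncomputable def offer {V : Type*} (w α : V → V → ℝ) (i j : V) : ℝ :=
  max (w i j - α i j) 0 - (1 / 2) * max (w i j - α i j - α j i) 0

/-- `max_{k ∈ ∂i ∖ {j}} m_{k→i}` (max over the empty set is 0). -/
noncomputable def bestAlt {V : Type*} [Fintype V] [DecidableEq V]
    (Adj : V → V → Prop) [DecidableRel Adj] (w α : V → V → ℝ) (i j : V) : ℝ :=
  (Finset.univ.filter fun k => Adj i k ∧ k ≠ j).fold max 0 fun k => offer w α k i

/-- Earnings `γ_i = max_{k ∈ ∂i} m_{k→i}` (max over the empty set is 0). -/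
noncomputable def earn {V : Type*} [Fintype V]
    (Adj : V → V → Prop) [DecidableRel Adj] (w α : V → V → ℝ) (i : V) : ℝ :=
  (Finset.univ.filter fun k => Adj i k).fold max 0 fun k => offer w α k i

/-- One step of the natural dynamics with damping factor `κ`:
`α'_{i→j} = κ · max_{k∈∂i∖{j}} m_{k→i} + (1−κ) · α_{i→j}`. -/
noncomputable def step {V : Type*} [Fintype V] [DecidableEq V]
    (Adj : V → V → Prop) [DecidableRel Adj] (w : V → V → ℝ) (κ : ℝ)
    (α : V → V → ℝ) : V → V → ℝ :=
  fun i j => κ * bestAlt Adj w α i j + (1 - κ) * α i j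

/-- A fixed point of the natural dynamics: the message vector is unchanged by the update. -/
def IsFixedPoint {V : Type*} [Fintype V] [DecidableEq V]
    (Adj : V → V → Prop) [DecidableRel Adj] (w : V → V → ℝ) (κ : ℝ)
    (α : V → V → ℝ) : Prop :=
  ∀ i j, Adj i j → step Adj w κ α i j = α i j

/-- `W`, the maximum edge weight. -/
noncomputable def maxW {V : Type*} [Fintype V]
    (Adj : V → V → Prop) [DecidableRel Adj] (w : V → V → ℝ) : ℝ :=
  ((Finset.univ ×ˢ Finset.univ).filter fun p : V × V => Adj p.1 p.2).fold max 0
    fun p => w p.1 p.2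

/-- A valid message vector: `α ∈ [0, W]^{2|E|}`. -/
def ValidMsg {V : Type*} [Fintype V]
    (Adj : V → V → Prop) [DecidableRel Adj] (w : V → V → ℝ) (α : V → V → ℝ) : Prop :=
  ∀ i j, Adj i j → α i j ∈ Set.Icc (0 : ℝ) (maxW Adj w)

/-- `G = (V, E)` is a finite simple graph with symmetric positive edge weights. -/
def GoodGraph {V : Type*} (Adj : V → V → Prop) (w : V → V → ℝ) : Prop :=
  (∀ i j, Adj i j → Adj j i) ∧ (∀ i, ¬Adj i i) ∧ (∀ i j, w i j = w j i) ∧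
  (∀ i j, Adj i j → 0 < w i j)

/-- Feasibility for the LP relaxation of maximum weight matching:
`x` symmetric, `x_{ij} ≥ 0` on edges, and `∑_{j∈∂i} x_{ij} ≤ 1` at every node. -/
def LPFeasible {V : Type*} [Fintype V]
    (Adj : V → V → Prop) [DecidableRel Adj] (x : V → V → ℝ) : Prop :=
  (∀ i j, x i j = x j i) ∧ (∀ i j, Adj i j → 0 ≤ x i j) ∧
  (∀ i, ∑ j ∈ Finset.univ.filter (fun j => Adj i j), x i j ≤ 1)

/-- The LP objective `∑_{(i,j)∈E} w_{ij} x_{ij}` (each undirected edge counted once,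
i.e. half the sum over ordered pairs). -/
noncomputable def LPobj {V : Type*} [Fintype V]
    (Adj : V → V → Prop) [DecidableRel Adj] (w x : V → V → ℝ) : ℝ :=
  (1 / 2) * ∑ p ∈ (Finset.univ ×ˢ Finset.univ).filter (fun p : V × V => Adj p.1 p.2),
    w p.1 p.2 * x p.1 p.2

/-!
Raising the weights of the edges with `x* = 0` by less than the gap `ε` keeps `x*` optimal, so
linear programming duality, with Birkhoff's theorem on the bipartite double cover, yields dual
prices `y` that are strictly complementary to `x*`. The earnings `γ` at a fixed point satisfy
`γ_i + γ_j = w_ij` on dotted edges and `γ_i + γ_j > w_ij` on non-dotted ones, which calls for a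
maximum principle for `γ - y` on the nodes whose edges in the support of `x*` are not all
strong-dotted. At a positive maximum `γ - y` changes sign along the edges of the support, all of
which are ½-solid there, and never changes its absolute value. The signs then give directions `±σ`
in which `x*` can be shifted to half-integral points whose mean is `x*`, contradicting the gap.
Hence `γ ≤ y` on these nodes, which rules out non-dotted edges in the support; the two claims
follow because an edge of the wrong kind would have both earnings, or both prices, equal to zero.
-/

section LinearProgramming

open Matrix

lemma nonpos_of_forall_pos_mul_le {a C : ℝ} (h : ∀ t, 0 < t → t * a ≤ C) : a ≤ 0 := by
  by_contra! ha
  have hC := h ((|C| + 1) / a) (by positivity)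
  rw [div_mul_cancel₀ _ ha.ne'] at hC
  linarith [le_abs_self C]

variable {ι κ : Type*} [Fintype ι] (A : Matrix κ ι ℝ) (b : κ → ℝ) (c : ι → ℝ)

/-- The strict hypograph of the value function `u ↦ sup {c ⬝ᵥ x | 0 ≤ x, A *ᵥ x < b + u}` of a
linear program. The strict inequalities make it open, so that points outside it can be separated
from it. -/
def strictValueHypograph : Set ((κ → ℝ) × ℝ) :=
  {p | ∃ x, 0 ≤ x ∧ (∀ k, (A *ᵥ x) k < b k + p.1 k) ∧ p.2 < c ⬝ᵥ x}

lemma convex_strictValueHypograph : Convex ℝ (strictValueHypograph A b c) := by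
  rw [convex_iff_forall_pos]
  rintro ⟨u, s⟩ ⟨x, hx, hxu, hxs⟩ ⟨v, t⟩ ⟨z, hz, hzv, hzt⟩ p q hp hq hpq
  refine ⟨p • x + q • z, by positivity, fun k => ?_, ?_⟩
  · have hu := mul_lt_mul_of_pos_left (hxu k) hp
    have hv := mul_lt_mul_of_pos_left (hzv k) hq
    have hb : p * b k + q * b k = b k := by rw [← add_mul, hpq, one_mul]
    simp only [mulVec_add, mulVec_smul, Prod.smul_mk, Prod.mk_add_mk, Pi.add_apply, Pi.smul_apply,
      smul_eq_mul]
    linarith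
  · simp only [dotProduct_add, dotProduct_smul, Prod.smul_mk, Prod.mk_add_mk, smul_eq_mul]
    exact add_lt_add (mul_lt_mul_of_pos_left hxs hp) (mul_lt_mul_of_pos_left hzt hq)

lemma isOpen_strictValueHypograph [Finite κ] : IsOpen (strictValueHypograph A b c) := by
  have hunion : strictValueHypograph A b c =
      ⋃ x ∈ {x | 0 ≤ x}, (⋂ k, {p | (A *ᵥ x) k < b k + p.1 k}) ∩ {p | p.2 < c ⬝ᵥ x} := by
    ext p
    simp only [strictValueHypograph, Set.mem_ofPred_eq, Set.mem_iUnion, Set.mem_inter_iff,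
      Set.mem_iInter, exists_prop]
  rw [hunion]
  exact isOpen_biUnion fun x _ => (isOpen_iInter_of_finite fun k =>
    isOpen_lt continuous_const (by fun_prop)).inter (isOpen_lt continuous_snd continuous_const)

variable [Fintype κ] {A b c} {B : ℝ}

/-- Slater's condition holds at `x = 0` because `b` is positive, so the separating hyperplane is
not vertical. -/
lemma exists_le_add_dotProduct_of_mem_strictValueHypograph (hb : ∀ k, 0 < b k)
    (h : ∀ x, 0 ≤ x → A *ᵥ x ≤ b → c ⬝ᵥ x ≤ B) :
    ∃ y : κ → ℝ, ∀ p ∈ strictValueHypograph A b c, p.2 ≤ B + y ⬝ᵥ p.1 := by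
  classical
  have hB : 0 ≤ B := by
    simpa using h 0 le_rfl (by rw [mulVec_zero]; exact fun k => (hb k).le)
  have hnotMem : ((0 : κ → ℝ), B) ∉ strictValueHypograph A b c := by
    rintro ⟨x, hx, hxb, hxB⟩
    exact (h x hx fun k => by simpa using (hxb k).le).not_gt hxB
  obtain ⟨f, hf⟩ := geometric_hahn_banach_open_point (convex_strictValueHypograph A b c)
    (isOpen_strictValueHypograph A b c) hnotMem
  obtain ⟨a, r, hfr⟩ : ∃ (a : κ → ℝ) (r : ℝ), ∀ u t, f (u, t) = u ⬝ᵥ a + t * r := by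
    refine ⟨fun k => f (Pi.single k 1, 0), f (0, 1), fun u t => ?_⟩
    have hut : (u, t) = ∑ k, u k • ((Pi.single k 1 : κ → ℝ), (0 : ℝ)) + t • (0, 1) := by
      ext l
      · simp [Prod.fst_sum, Pi.single_apply]
      · simp [Prod.snd_sum]
    rw [hut, map_add, map_sum, map_smul, smul_eq_mul]
    simp only [map_smul, smul_eq_mul, dotProduct]
  have hr : 0 < r := by
    have hslater := hf (0, -1) ⟨0, le_rfl, by simpa using hb, by simp⟩
    simp only [hfr, zero_dotProduct, zero_add] at hslater
    by_contra! hr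
    nlinarith
  refine ⟨-r⁻¹ • a, fun ⟨u, t⟩ hut => ?_⟩
  have hlt := hf _ hut
  simp only [hfr, zero_dotProduct, zero_add] at hlt
  have hsep : t < B - r⁻¹ * (u ⬝ᵥ a) := by
    rw [← mul_lt_mul_iff_left₀ hr, sub_mul, mul_right_comm, inv_mul_cancel₀ hr.ne', one_mul]
    linarith
  simp only [smul_dotProduct, smul_eq_mul, dotProduct_comm a u]
  linarith

lemma exists_lagrangeMultipliers (hb : ∀ k, 0 < b k)
    (h : ∀ x, 0 ≤ x → A *ᵥ x ≤ b → c ⬝ᵥ x ≤ B) :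
    ∃ y, 0 ≤ y ∧ ∀ x, 0 ≤ x → c ⬝ᵥ x + y ⬝ᵥ (b - A *ᵥ x) ≤ B := by
  classical
  obtain ⟨y, hy⟩ := exists_le_add_dotProduct_of_mem_strictValueHypograph hb h
  refine ⟨y, fun k => neg_nonpos.1 ?_, fun x hx => sub_nonpos.1 ?_⟩
  · refine nonpos_of_forall_pos_mul_le (C := B + 1) fun t ht => ?_
    have hk := hy (Pi.single k t, -1) ⟨0, le_rfl, fun l => ?_, by simp⟩
    · rw [dotProduct_single] at hk
      linarith
    · have hl : 0 ≤ (Pi.single k t : κ → ℝ) l :=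
        (Pi.single_nonneg.2 ht.le : (0 : κ → ℝ) ≤ Pi.single k t) l
      simpa using add_pos_of_pos_of_nonneg (hb l) hl
  · refine nonpos_of_forall_pos_mul_le (C := 1 + y ⬝ᵥ 1) fun t ht => ?_
    have hmem : (A *ᵥ x - b + t⁻¹ • 1, c ⬝ᵥ x - t⁻¹) ∈ strictValueHypograph A b c := by
      refine ⟨x, hx, fun k => ?_, sub_lt_self _ (inv_pos.2 ht)⟩
      simp only [Pi.add_apply, Pi.sub_apply, Pi.smul_apply, Pi.one_apply, smul_eq_mul]
      linarith [inv_pos.2 ht]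
    have hmul := mul_le_mul_of_nonneg_left (hy _ hmem) ht.le
    simp only [dotProduct_add, dotProduct_sub, dotProduct_smul, smul_eq_mul, mul_add, mul_sub,
      mul_inv_cancel₀ ht.ne', mul_inv_cancel_left₀ ht.ne'] at hmul ⊢
    linarith

theorem exists_dual_of_forall_dotProduct_le (hb : ∀ k, 0 < b k)
    (h : ∀ x, 0 ≤ x → A *ᵥ x ≤ b → c ⬝ᵥ x ≤ B) :
    ∃ y, 0 ≤ y ∧ c ≤ y ᵥ* A ∧ y ⬝ᵥ b ≤ B := by
  classical
  obtain ⟨y, hy, hyB⟩ := exists_lagrangeMultipliers hb h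
  refine ⟨y, hy, fun i => sub_nonpos.1 ?_, by simpa using hyB 0 le_rfl⟩
  refine nonpos_of_forall_pos_mul_le (C := B - y ⬝ᵥ b) fun t ht => ?_
  have hray := hyB (Pi.single i t) (Pi.single_nonneg.2 ht.le)
  rw [dotProduct_sub, dotProduct_mulVec, dotProduct_single, dotProduct_single] at hray
  linarith

end LinearProgramming

section Assignment

open Matrix

variable {R m n : Type*} [Field R] [LinearOrder R] [IsStrictOrderedRing R] [Fintype m] [Fintype n]

/-- Doubly substochastic matrices, the fractional assignments of rows to columns: the entries are
nonnegative and no row or column sum exceeds `1`. -/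
structure IsDoublySubstochastic (X : Matrix m n R) : Prop where
  nonneg : ∀ i j, 0 ≤ X i j
  row_sum_le : ∀ i, ∑ j, X i j ≤ 1
  col_sum_le : ∀ j, ∑ i, X i j ≤ 1

/-- Integral assignments: doubly substochastic matrices with entries `0` and `1`. -/
structure IsPartialPermMatrix (P : Matrix m n R) : Prop extends IsDoublySubstochastic P where
  eq_zero_or_one : ∀ i j, P i j = 0 ∨ P i j = 1

/-- The dilation of a doubly substochastic matrix to a symmetric doubly stochastic one. -/
def stochasticDilation [DecidableEq m] [DecidableEq n] (X : Matrix m n R) :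
    Matrix (m ⊕ n) (m ⊕ n) R :=
  fromBlocks (diagonal fun i => 1 - ∑ j, X i j) X Xᵀ (diagonal fun j => 1 - ∑ i, X i j)

lemma IsDoublySubstochastic.stochasticDilation_mem [DecidableEq m]
    [DecidableEq n] {X : Matrix m n R} (hX : IsDoublySubstochastic X) :
    stochasticDilation X ∈ doublyStochastic R (m ⊕ n) := by
  have hrow : ∀ k, ∑ l, stochasticDilation X k l = 1 := by
    rintro (i | j) <;> simp [stochasticDilation, Fintype.sum_sum_type, diagonal_apply]
  have hsymm : (stochasticDilation X)ᵀ = stochasticDilation X := by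
    simp [stochasticDilation, fromBlocks_transpose]
  refine mem_doublyStochastic_iff_sum.2 ⟨?_, hrow, fun l => ?_⟩
  · rintro (i | j) (k | l)
    · simp only [stochasticDilation, fromBlocks_apply₁₁, diagonal_apply]
      split_ifs
      exacts [sub_nonneg.2 (hX.row_sum_le i), le_rfl]
    · exact hX.nonneg i l
    · exact hX.nonneg k j
    · simp only [stochasticDilation, fromBlocks_apply₂₂, diagonal_apply]
      split_ifs
      exacts [sub_nonneg.2 (hX.col_sum_le j), le_rfl]
  · rw [← hrow l]
    exact sum_congr rfl fun k _ => by rw [← transpose_apply (stochasticDilation X), hsymm]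

lemma isPartialPermMatrix_permMatrix_toBlocks₁₂ [DecidableEq m] [DecidableEq n]
    (σ : Equiv.Perm (m ⊕ n)) : IsPartialPermMatrix (σ.permMatrix R).toBlocks₁₂ := by
  have hσ := permMatrix_mem_doublyStochastic (R := R) (σ := σ)
  have hnonneg : ∀ k l, 0 ≤ σ.permMatrix R k l := fun k l => nonneg_of_mem_doublyStochastic hσ
  refine ⟨⟨fun i j => hnonneg _ _, fun i => ?_, fun j => ?_⟩, fun i j => ?_⟩
  · rw [← sum_row_of_mem_doublyStochastic hσ (Sum.inl i), Fintype.sum_sum_type]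
    exact le_add_of_nonneg_left (sum_nonneg fun k _ => hnonneg _ _)
  · rw [← sum_col_of_mem_doublyStochastic hσ (Sum.inr j), Fintype.sum_sum_type]
    exact le_add_of_nonneg_right (sum_nonneg fun k _ => hnonneg _ _)
  · simp only [toBlocks₁₂, of_apply, Equiv.Perm.permMatrix, Equiv.toPEquiv, PEquiv.toMatrix_apply]
    split_ifs <;> simp

theorem IsDoublySubstochastic.exists_isPartialPermMatrix_le {X : Matrix m n R}
    (hX : IsDoublySubstochastic X) (c : Matrix m n R) :
    ∃ P, IsPartialPermMatrix P ∧ ∑ i, ∑ j, c i j * X i j ≤ ∑ i, ∑ j, c i j * P i j := by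
  classical
  let payoff : Matrix (m ⊕ n) (m ⊕ n) R →ₗ[R] R :=
    ∑ i, ∑ j, c i j • entryLinearMap R R (Sum.inl i) (Sum.inr j)
  have hpayoff M : payoff M = ∑ i, ∑ j, c i j * M.toBlocks₁₂ i j := by
    simp [payoff, LinearMap.sum_apply, toBlocks₁₂]
  have hmem : stochasticDilation X ∈
      convexHull R {M | ∃ σ : Equiv.Perm (m ⊕ n), σ.permMatrix R = M} := by
    rw [← doublyStochastic_eq_convexHull_permMatrix]
    exact hX.stochasticDilation_mem
  obtain ⟨_, ⟨σ, rfl⟩, hσ⟩ :=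
    (payoff.convexOn convex_univ).exists_ge_of_mem_convexHull (Set.subset_univ _) hmem
  refine ⟨_, isPartialPermMatrix_permMatrix_toBlocks₁₂ σ, ?_⟩
  rw [hpayoff, hpayoff] at hσ
  exact hσ

/-- The node-edge incidence matrix of the complete bipartite graph on `m` and `n`. -/
def bipartiteIncidence (m n : Type*) [DecidableEq m] [DecidableEq n] : Matrix (m ⊕ n) (m × n) ℝ :=
  of fun k p => k.elim (fun i => if i = p.1 then 1 else 0) (fun j => if j = p.2 then 1 else 0)

theorem exists_assignment_dual {c : Matrix m n ℝ} {B : ℝ}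
    (h : ∀ P, IsPartialPermMatrix P → ∑ i, ∑ j, c i j * P i j ≤ B) :
    ∃ (u : m → ℝ) (v : n → ℝ), (∀ i, 0 ≤ u i) ∧ (∀ j, 0 ≤ v j) ∧
      (∀ i j, c i j ≤ u i + v j) ∧ ∑ i, u i + ∑ j, v j ≤ B := by
  classical
  have hprimal : ∀ x, 0 ≤ x → bipartiteIncidence m n *ᵥ x ≤ 1 →
      (fun p : m × n => c p.1 p.2) ⬝ᵥ x ≤ B := by
    intro x hx hx1
    have hX : IsDoublySubstochastic (of fun i j => x (i, j)) := by
      refine ⟨fun i j => hx (i, j), fun i => ?_, fun j => ?_⟩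
      · simpa [bipartiteIncidence, mulVec, dotProduct, Fintype.sum_prod_type_right] using
          hx1 (Sum.inl i)
      · simpa [bipartiteIncidence, mulVec, dotProduct, Fintype.sum_prod_type] using hx1 (Sum.inr j)
    obtain ⟨P, hP, hle⟩ := hX.exists_isPartialPermMatrix_le c
    rw [dotProduct, Fintype.sum_prod_type]
    exact hle.trans (h P hP)
  obtain ⟨y, hy, hcover, hyB⟩ := exists_dual_of_forall_dotProduct_le (fun _ => one_pos) hprimal
  refine ⟨fun i => y (Sum.inl i), fun j => y (Sum.inr j), fun i => hy _, fun j => hy _,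
    fun i j => ?_, ?_⟩
  · simpa [bipartiteIncidence, vecMul, dotProduct, Fintype.sum_sum_type] using hcover (i, j)
  · simpa [dotProduct, Fintype.sum_sum_type] using hyB

end Assignment

section MatchingRelaxation

open Matrix

variable {V : Type*}

/-- The values `0`, `1/2`, `1` on every edge: the half-integral points of the LP relaxation. -/
def IsHalfIntegral (Adj : V → V → Prop) (x : V → V → ℝ) : Prop :=
  ∀ i j, Adj i j → x i j = 0 ∨ x i j = 1 / 2 ∨ x i j = 1

/-- The symmetric part of a square matrix, which turns assignments of `V` to itself into points of
the matching relaxation. -/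
noncomputable def symmPart (P : Matrix V V ℝ) (i j : V) : ℝ := (P i j + P j i) / 2

lemma symmPart_comm (P : Matrix V V ℝ) (i j : V) : symmPart P i j = symmPart P j i := by
  rw [symmPart, symmPart, add_comm]

/-- The shift of `symmPart P` along the alternating paths and cycles of `P`, in the direction given
by the signs `σ` of the nodes. -/
noncomputable def alternatingShift (P : Matrix V V ℝ) (σ : V → SignType) (i j : V) : ℝ :=
  symmPart P i j + ((σ i : ℝ) - σ j) / 4 * (P i j - P j i)

lemma alternatingShift_comm (P : Matrix V V ℝ) (σ : V → SignType) (i j : V) :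
    alternatingShift P σ i j = alternatingShift P σ j i := by
  rw [alternatingShift, alternatingShift, symmPart_comm]
  ring

variable [Fintype V]

/-- A half-integral optimum `x` certifying that the LP relaxation is pointed. Points are compared
on edges only, since `LPFeasible` and `LPobj` ignore the other entries. -/
structure IsPointedOptimum (Adj : V → V → Prop) [DecidableRel Adj] (w x : V → V → ℝ) : Prop where
  feasible : LPFeasible Adj x
  halfIntegral : IsHalfIntegral Adj x
  exists_gap : ∃ ε > 0, ∀ z, LPFeasible Adj z → IsHalfIntegral Adj z →
    (∃ i j, Adj i j ∧ z i j ≠ x i j) → LPobj Adj w z + ε ≤ LPobj Adj w x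

lemma IsPartialPermMatrix.isHalfIntegral_symmPart {Adj : V → V → Prop} {P : Matrix V V ℝ}
    (hP : IsPartialPermMatrix P) : IsHalfIntegral Adj (symmPart P) := by
  intro i j _
  rcases hP.eq_zero_or_one i j with h | h <;> rcases hP.eq_zero_or_one j i with h' | h' <;>
    norm_num [symmPart, h, h']

variable {Adj : V → V → Prop} [DecidableRel Adj] {w p x z : V → V → ℝ}

lemma LPobj_eq_sum (Adj : V → V → Prop) [DecidableRel Adj] (w x : V → V → ℝ) :
    LPobj Adj w x = 1 / 2 * ∑ i, ∑ j with Adj i j, w i j * x i j := by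
  simp only [LPobj, sum_filter, sum_product]

lemma LPobj_add_left (p w x : V → V → ℝ) :
    LPobj Adj (w + p) x = LPobj Adj w x + LPobj Adj p x := by
  simp only [LPobj, Pi.add_apply, add_mul, sum_add_distrib, mul_add]

lemma LPobj_congr (h : ∀ i j, Adj i j → x i j = z i j) : LPobj Adj w x = LPobj Adj w z := by
  simp only [LPobj_eq_sum]
  congr 1
  refine sum_congr rfl fun i _ => sum_congr rfl fun j hj => ?_
  rw [h i j (mem_filter.1 hj).2]

lemma sum_adj_swap (hadj : ∀ i j, Adj i j → Adj j i) (f : V → V → ℝ) :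
    ∑ i, ∑ j with Adj i j, f j i = ∑ i, ∑ j with Adj i j, f i j := by
  have hcomm : ∀ i j, Adj i j ↔ Adj j i := fun i j => ⟨hadj i j, hadj j i⟩
  simp only [sum_filter]
  rw [sum_comm]
  exact sum_congr rfl fun i _ => sum_congr rfl fun j _ => if_congr (hcomm j i) rfl rfl

lemma LPobj_symmPart (hadj : ∀ i j, Adj i j → Adj j i) (hw : ∀ i j, w i j = w j i)
    (P : Matrix V V ℝ) :
    LPobj Adj w (symmPart P) = 1 / 2 * ∑ i, ∑ j with Adj i j, w i j * P i j := by
  have hswap := sum_adj_swap hadj fun i j => w i j * P i j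
  have hterm : ∀ i j, w i j * symmPart P i j =
      1 / 2 * (w i j * P i j) + 1 / 2 * (w j i * P j i) := by
    intro i j
    rw [hw j i, symmPart]
    ring
  simp only [LPobj_eq_sum, hterm, sum_add_distrib, ← mul_sum, hswap]
  ring

lemma IsDoublySubstochastic.lpFeasible_symmPart {P : Matrix V V ℝ}
    (hP : IsDoublySubstochastic P) : LPFeasible Adj (symmPart P) := by
  refine ⟨symmPart_comm P, fun i j _ => ?_, fun i => ?_⟩
  · have := hP.nonneg i j
    have := hP.nonneg j i
    unfold symmPart
    positivity
  · have hle : ∑ j with Adj i j, symmPart P i j ≤ ∑ j, symmPart P i j :=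
      sum_le_univ_sum_of_nonneg fun j => by
        unfold symmPart
        linarith [hP.nonneg i j, hP.nonneg j i]
    have hsum : ∑ j, symmPart P i j = (∑ j, P i j + ∑ j, P j i) / 2 := by
      simp only [symmPart, ← sum_div, sum_add_distrib]
    linarith [hP.row_sum_le i, hP.col_sum_le i]

lemma LPFeasible.isDoublySubstochastic (hadj : ∀ i j, Adj i j → Adj j i) (hx : LPFeasible Adj x) :
    IsDoublySubstochastic (of fun i j => if Adj i j then x i j else 0) := by
  obtain ⟨hsymm, hnonneg, hload⟩ := hx
  have hcomm : ∀ i j, Adj i j ↔ Adj j i := fun i j => ⟨hadj i j, hadj j i⟩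
  refine ⟨fun i j => ?_, fun i => ?_, fun j => ?_⟩
  · rw [of_apply]
    split_ifs with h
    exacts [hnonneg i j h, le_rfl]
  · simpa [sum_filter] using hload i
  · simpa [sum_filter, hcomm _ j, hsymm _ j] using hload j

lemma LPFeasible.exists_isPartialPermMatrix_le (hadj : ∀ i j, Adj i j → Adj j i)
    (hw : ∀ i j, w i j = w j i) (hx : LPFeasible Adj x) :
    ∃ P, IsPartialPermMatrix P ∧ LPobj Adj w x ≤ LPobj Adj w (symmPart P) := by
  obtain ⟨P, hP, hle⟩ := (hx.isDoublySubstochastic hadj).exists_isPartialPermMatrix_le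
    (of fun i j => if Adj i j then w i j else 0)
  refine ⟨P, hP, ?_⟩
  rw [LPobj_symmPart hadj hw, LPobj_eq_sum]
  simpa [sum_filter, ← ite_and] using hle

lemma IsPointedOptimum.exists_eq_symmPart (hx : IsPointedOptimum Adj w x)
    (hadj : ∀ i j, Adj i j → Adj j i) (hw : ∀ i j, w i j = w j i) :
    ∃ P, IsPartialPermMatrix P ∧ ∀ i j, Adj i j → symmPart P i j = x i j := by
  obtain ⟨ε, hε, hgap⟩ := hx.exists_gap
  obtain ⟨P, hP, hle⟩ := hx.feasible.exists_isPartialPermMatrix_le hadj hw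
  refine ⟨P, hP, fun i j hij => ?_⟩
  by_contra hne
  linarith [hgap _ hP.lpFeasible_symmPart hP.isHalfIntegral_symmPart ⟨i, j, hij, hne⟩]

lemma exists_cover_of_forall_LPobj_symmPart_le (hadj : ∀ i j, Adj i j → Adj j i)
    (hw : ∀ i j, w i j = w j i) {B : ℝ}
    (h : ∀ P, IsPartialPermMatrix P → LPobj Adj w (symmPart P) ≤ B) :
    ∃ y : V → ℝ, (∀ i, 0 ≤ y i) ∧ (∀ i j, Adj i j → w i j ≤ y i + y j) ∧ ∑ i, y i ≤ B := by
  obtain ⟨u, v, hu, hv, hcover, huv⟩ := exists_assignment_dual (B := 2 * B)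
    (c := of fun i j => if Adj i j then w i j else 0) fun P hP => by
      have hle := h P hP
      rw [LPobj_symmPart hadj hw] at hle
      simp only [of_apply, ite_mul, zero_mul, ← sum_filter]
      linarith
  refine ⟨fun i => (u i + v i) / 2, fun i => ?_, fun i j hij => ?_, ?_⟩
  · linarith [hu i, hv i]
  · have hij' := hcover i j
    have hji' := hcover j i
    simp only [of_apply, hij, hadj i j hij, if_true] at hij' hji'
    linarith [hw i j]
  · rw [← sum_div, sum_add_distrib]
    linarith

lemma sum_sub_LPobj (hadj : ∀ i j, Adj i j → Adj j i) (hx : ∀ i j, x i j = x j i) (y : V → ℝ) :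
    ∑ i, y i - LPobj Adj w x = ∑ i, y i * (1 - ∑ j with Adj i j, x i j) +
      1 / 2 * ∑ i, ∑ j with Adj i j, (y i + y j - w i j) * x i j := by
  have hswap := sum_adj_swap hadj fun i j => y i * x i j
  have hedge : ∀ i j, (y i + y j - w i j) * x i j = y i * x i j + y j * x j i - w i j * x i j := by
    intro i j
    rw [hx j i]
    ring
  simp only [LPobj_eq_sum, hedge, mul_one_sub, sum_add_distrib, sum_sub_distrib, mul_sum, hswap]
    at hswap ⊢
  simp only [← mul_sum]
  ring

/-- Complementary slackness: the nonnegative terms of `sum_sub_LPobj` vanish once its left-hand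
side is nonpositive. -/
lemma LPFeasible.complementary_slackness (hadj : ∀ i j, Adj i j → Adj j i) (hx : LPFeasible Adj x)
    {y : V → ℝ} (hy : ∀ i, 0 ≤ y i) (hcover : ∀ i j, Adj i j → w i j ≤ y i + y j)
    (hle : ∑ i, y i ≤ LPobj Adj w x) :
    (∀ i, y i * (1 - ∑ j with Adj i j, x i j) = 0) ∧
      ∀ i j, Adj i j → (y i + y j - w i j) * x i j = 0 := by
  obtain ⟨hsymm, hnonneg, hload⟩ := hx
  have hnode : ∀ i, 0 ≤ y i * (1 - ∑ j with Adj i j, x i j) := fun i =>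
    mul_nonneg (hy i) (sub_nonneg.2 (hload i))
  have hedge : ∀ i j, j ∈ ({j | Adj i j} : Finset V) → 0 ≤ (y i + y j - w i j) * x i j := by
    intro i j hj
    have hij := (mem_filter.1 hj).2
    exact mul_nonneg (sub_nonneg.2 (hcover i j hij)) (hnonneg i j hij)
  have hsum := sum_sub_LPobj (w := w) hadj hsymm y
  have hnodes := sum_nonneg fun i (_ : i ∈ univ) => hnode i
  have hedges := sum_nonneg fun i (_ : i ∈ univ) => sum_nonneg (hedge i)
  refine ⟨fun i => ?_, fun i j hij => ?_⟩
  · exact (sum_eq_zero_iff_of_nonneg fun i _ => hnode i).1 (by linarith) i (mem_univ i)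
  · have hi := (sum_eq_zero_iff_of_nonneg fun i _ => sum_nonneg (hedge i)).1 (by linarith) i
      (mem_univ i)
    exact (sum_eq_zero_iff_of_nonneg (hedge i)).1 hi j (by simpa using hij)

/-- A dual optimum `y` that is strictly complementary to `x` on the edges: exactly the edges
carrying mass are tight. -/
structure IsStrictDual (Adj : V → V → Prop) [DecidableRel Adj] (w x : V → V → ℝ) (y : V → ℝ) :
    Prop where
  nonneg : ∀ i, 0 ≤ y i
  add_eq_of_pos : ∀ i j, Adj i j → 0 < x i j → y i + y j = w i j
  lt_add_of_eq_zero : ∀ i j, Adj i j → x i j = 0 → w i j < y i + y j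
  sum_eq_one_of_pos : ∀ i, 0 < y i → ∑ j with Adj i j, x i j = 1

lemma LPFeasible.LPobj_le_mul_card (hz : LPFeasible Adj z) {η : ℝ} (hη : 0 ≤ η)
    (hp : ∀ i j, Adj i j → p i j ≤ η) : LPobj Adj p z ≤ η * Fintype.card V := by
  obtain ⟨-, hnonneg, hload⟩ := hz
  have hnode : ∀ i, ∑ j with Adj i j, p i j * z i j ≤ η := by
    intro i
    calc ∑ j with Adj i j, p i j * z i j ≤ ∑ j with Adj i j, η * z i j := by
          refine sum_le_sum fun j hj => ?_
          have hij := (mem_filter.1 hj).2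
          exact mul_le_mul_of_nonneg_right (hp i j hij) (hnonneg i j hij)
      _ ≤ η := by
          rw [← mul_sum]
          exact mul_le_of_le_one_right hη (hload i)
  have hsum := sum_le_card_nsmul univ _ η fun i _ => hnode i
  rw [nsmul_eq_mul, card_univ, mul_comm] at hsum
  have hcard : 0 ≤ η * Fintype.card V := by positivity
  rw [LPobj_eq_sum]
  linarith

lemma LPobj_ite_eq_zero (η : ℝ) : LPobj Adj (fun i j => if x i j = 0 then η else 0) x = 0 := by
  have hterm : ∀ i j, (if x i j = 0 then η else 0) * x i j = 0 := by
    intro i j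
    split_ifs with h
    exacts [by rw [h, mul_zero], zero_mul _]
  simp only [LPobj_eq_sum, hterm, sum_const_zero, mul_zero]

lemma IsPointedOptimum.exists_forall_LPobj_add_le (hx : IsPointedOptimum Adj w x) :
    ∃ η > 0, ∀ P, IsPartialPermMatrix P →
      LPobj Adj (w + fun i j => if x i j = 0 then η else 0) (symmPart P) ≤ LPobj Adj w x := by
  obtain ⟨ε, hε, hgap⟩ := hx.exists_gap
  obtain ⟨η, hη, hηε⟩ : ∃ η : ℝ, 0 < η ∧ η * Fintype.card V ≤ ε := by
    refine ⟨ε / (Fintype.card V + 1), by positivity, ?_⟩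
    rw [div_mul_eq_mul_div, div_le_iff₀ (by positivity)]
    nlinarith
  refine ⟨η, hη, fun P hP => ?_⟩
  rw [LPobj_add_left]
  by_cases hne : ∃ i j, Adj i j ∧ symmPart P i j ≠ x i j
  · have hle : LPobj Adj (fun i j => if x i j = 0 then η else 0) (symmPart P) ≤
        η * Fintype.card V :=
      hP.lpFeasible_symmPart.LPobj_le_mul_card hη.le fun i j _ => by split_ifs <;> linarith
    linarith [hgap _ hP.lpFeasible_symmPart hP.isHalfIntegral_symmPart hne]
  · push Not at hne
    rw [LPobj_congr hne, LPobj_congr hne, LPobj_ite_eq_zero, add_zero]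

/-- Raising the weights of the edges that carry no mass by less than the gap keeps `x` optimal, and
complementary slackness for the raised weights is strict for the original ones. -/
lemma IsPointedOptimum.exists_isStrictDual (hx : IsPointedOptimum Adj w x)
    (hadj : ∀ i j, Adj i j → Adj j i) (hw : ∀ i j, w i j = w j i) :
    ∃ y, IsStrictDual Adj w x y := by
  obtain ⟨η, hη, hopt⟩ := hx.exists_forall_LPobj_add_le
  have hraised : ∀ i j, (w + fun i j => if x i j = 0 then η else 0) i j =
      (w + fun i j => if x i j = 0 then η else 0) j i := fun i j => by
    simp only [Pi.add_apply, hw i j, hx.feasible.1 i j]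
  obtain ⟨y, hy, hcover, hsum⟩ := exists_cover_of_forall_LPobj_symmPart_le hadj hraised hopt
  obtain ⟨hnode, hedge⟩ := hx.feasible.complementary_slackness hadj hy hcover
    (by rwa [LPobj_add_left, LPobj_ite_eq_zero, add_zero])
  refine ⟨y, hy, fun i j hij hpos => ?_, fun i j hij h0 => ?_, fun i hi => ?_⟩
  · have h := (mul_eq_zero.1 (hedge i j hij)).resolve_right hpos.ne'
    simp only [Pi.add_apply, hpos.ne', if_false] at h
    linarith
  · have h := hcover i j hij
    simp only [Pi.add_apply, h0, if_true] at h
    linarith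
  · linarith [(mul_eq_zero.1 (hnode i)).resolve_left hi.ne']

lemma LPFeasible.of_le (hx : LPFeasible Adj x) (hsymm : ∀ i j, z i j = z j i)
    (hnonneg : ∀ i j, Adj i j → 0 ≤ z i j) (hle : ∀ i j, Adj i j → z i j ≤ x i j) :
    LPFeasible Adj z :=
  ⟨hsymm, hnonneg, fun i =>
    (sum_le_sum fun j hj => hle i j (mem_filter.1 hj).2).trans (hx.2.2 i)⟩

lemma IsPointedOptimum.weight_pos_of_pos (hx : IsPointedOptimum Adj w x)
    (hw : ∀ i j, w i j = w j i) {a b : V} (hab : Adj a b) (hpos : 0 < x a b) : 0 < w a b := by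
  classical
  obtain ⟨ε, hε, hgap⟩ := hx.exists_gap
  have hnonneg := hx.feasible.2.1
  by_contra! hwab
  let z : V → V → ℝ := fun i j => if s(i, j) = s(a, b) then 0 else x i j
  have hz : LPFeasible Adj z := by
    refine hx.feasible.of_le (fun i j => ?_) (fun i j hij => ?_) fun i j hij => ?_
    · simp only [z, hx.feasible.1 i j, Sym2.eq_swap (a := i)]
    all_goals
      simp only [z]
      split_ifs
      exacts [by simp [hnonneg i j hij], by simp [hnonneg i j hij]]
  have hzhalf : IsHalfIntegral Adj z := fun i j hij => by
    simp only [z]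
    split_ifs
    exacts [Or.inl rfl, hx.halfIntegral i j hij]
  have hle : LPobj Adj w x ≤ LPobj Adj w z := by
    refine mul_le_mul_of_nonneg_left (sum_le_sum fun e he => ?_) (by norm_num)
    have hnonneg_e := hnonneg e.1 e.2 (mem_filter.1 he).2
    simp only [z]
    split_ifs with h
    · have hwe : w e.1 e.2 = w a b := by
        rcases Sym2.eq_iff.1 h with ⟨ha, hb⟩ | ⟨hb, ha⟩
        exacts [by rw [ha, hb], by rw [ha, hb, hw]]
      rw [hwe, mul_zero]
      exact mul_nonpos_of_nonpos_of_nonneg hwab hnonneg_e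
    · exact le_rfl
  linarith [hgap z hz hzhalf ⟨a, b, hab, by simpa [z] using hpos.ne⟩]

lemma LPobj_alternatingShift_add_neg (P : Matrix V V ℝ) (σ : V → SignType) :
    LPobj Adj w (alternatingShift P σ) + LPobj Adj w (alternatingShift P (-σ)) =
      2 * LPobj Adj w (symmPart P) := by
  have hterm : ∀ i j, w i j * alternatingShift P σ i j + w i j * alternatingShift P (-σ) i j =
      2 * (w i j * symmPart P i j) := by
    intro i j
    simp only [alternatingShift, Pi.neg_apply, SignType.coe_neg]
    ring
  simp only [LPobj, ← mul_add, ← sum_add_distrib, hterm, ← mul_sum]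
  ring

lemma signType_cast_mem_Icc (s : SignType) : (s : ℝ) ∈ Set.Icc (-1) 1 := by
  cases s <;> norm_num

namespace IsPartialPermMatrix

variable {P : Matrix V V ℝ} {σ : V → SignType}

lemma alternatingShift_eq (hP : IsPartialPermMatrix P) {i j : V}
    (hσ : 0 < symmPart P i j → σ j = -σ i) :
    alternatingShift P σ i j = (1 + σ i) / 2 * P i j + (1 - σ i) / 2 * P j i := by
  have hij := hP.nonneg i j
  have hji := hP.nonneg j i
  rcases le_or_gt (symmPart P i j) 0 with h | h
  · unfold symmPart at h
    rw [alternatingShift, symmPart, show P i j = 0 by linarith, show P j i = 0 by linarith]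
    ring
  · rw [alternatingShift, symmPart, hσ h, SignType.coe_neg]
    ring

lemma lpFeasible_alternatingShift (hP : IsPartialPermMatrix P)
    (hσ : ∀ i j, Adj i j → 0 < symmPart P i j → σ j = -σ i) :
    LPFeasible Adj (alternatingShift P σ) := by
  have hrange i := signType_cast_mem_Icc (σ i)
  have hfwd i : 0 ≤ (1 + (σ i : ℝ)) / 2 := by linarith [(hrange i).1]
  have hbwd i : 0 ≤ (1 - (σ i : ℝ)) / 2 := by linarith [(hrange i).2]
  have hnonneg i j : 0 ≤ (1 + (σ i : ℝ)) / 2 * P i j + (1 - (σ i : ℝ)) / 2 * P j i :=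
    add_nonneg (mul_nonneg (hfwd i) (hP.nonneg i j)) (mul_nonneg (hbwd i) (hP.nonneg j i))
  refine ⟨alternatingShift_comm P σ, fun i j hij => ?_, fun i => ?_⟩
  · rw [hP.alternatingShift_eq (hσ i j hij)]
    exact hnonneg i j
  · calc ∑ j with Adj i j, alternatingShift P σ i j
        = ∑ j with Adj i j, ((1 + σ i) / 2 * P i j + (1 - σ i) / 2 * P j i) :=
          sum_congr rfl fun j hj => hP.alternatingShift_eq (hσ i j (mem_filter.1 hj).2)
      _ ≤ ∑ j, ((1 + σ i) / 2 * P i j + (1 - σ i) / 2 * P j i) :=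
          sum_le_univ_sum_of_nonneg (hnonneg i)
      _ = (1 + σ i) / 2 * ∑ j, P i j + (1 - σ i) / 2 * ∑ j, P j i := by
          rw [sum_add_distrib, mul_sum, mul_sum]
      _ ≤ (1 + σ i) / 2 * 1 + (1 - σ i) / 2 * 1 :=
          add_le_add (mul_le_mul_of_nonneg_left (hP.row_sum_le i) (hfwd i))
            (mul_le_mul_of_nonneg_left (hP.col_sum_le i) (hbwd i))
      _ = 1 := by ring

lemma isHalfIntegral_alternatingShift {Adj : V → V → Prop} (hP : IsPartialPermMatrix P)
    (hσ : ∀ i j, Adj i j → 0 < symmPart P i j → σ j = -σ i) :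
    IsHalfIntegral Adj (alternatingShift P σ) := by
  intro i j hij
  rw [hP.alternatingShift_eq (hσ i j hij)]
  rcases hP.eq_zero_or_one i j with h | h <;> rcases hP.eq_zero_or_one j i with h' | h' <;>
    cases σ i <;> norm_num [h, h']

lemma alternatingShift_ne_half (hP : IsPartialPermMatrix P) {i j : V} (hi : σ i ≠ 0)
    (hσ : 0 < symmPart P i j → σ j = -σ i) : alternatingShift P σ i j ≠ 1 / 2 := by
  rw [hP.alternatingShift_eq hσ]
  rcases hP.eq_zero_or_one i j with h | h <;> rcases hP.eq_zero_or_one j i with h' | h' <;>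
    cases hs : σ i <;> first | exact absurd hs hi | norm_num [h, h']

end IsPartialPermMatrix

/-- Otherwise the half-integral points obtained by shifting `x` in the direction of the signs of
`f`, and in the opposite direction, would both lose against `x`, although `x` is their mean. -/
lemma IsPointedOptimum.eq_zero_of_add_eq_zero (hx : IsPointedOptimum Adj w x)
    (hadj : ∀ i j, Adj i j → Adj j i) (hw : ∀ i j, w i j = w j i) {f : V → ℝ}
    (hf : ∀ i j, Adj i j → 0 < x i j → f i + f j = 0) {a b : V} (hab : Adj a b)
    (hhalf : x a b = 1 / 2) : f a = 0 := by
  obtain ⟨ε, hε, hgap⟩ := hx.exists_gap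
  obtain ⟨P, hP, hPx⟩ := hx.exists_eq_symmPart hadj hw
  have hloses : ∀ σ : V → SignType, σ a ≠ 0 →
      (∀ i j, Adj i j → 0 < symmPart P i j → σ j = -σ i) →
      LPobj Adj w (alternatingShift P σ) + ε ≤ LPobj Adj w x := fun σ ha hσ =>
    hgap _ (hP.lpFeasible_alternatingShift hσ) (hP.isHalfIntegral_alternatingShift hσ)
      ⟨a, b, hab, hhalf ▸ hP.alternatingShift_ne_half ha (hσ a b hab)⟩
  by_contra hfa
  let σ : V → SignType := fun i => SignType.sign (f i)
  have ha : σ a ≠ 0 := sign_ne_zero.2 hfa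
  have hσ : ∀ i j, Adj i j → 0 < symmPart P i j → σ j = -σ i := by
    intro i j hij hpos
    rw [hPx i j hij] at hpos
    simp only [σ, eq_neg_of_add_eq_zero_right (hf i j hij hpos), Left.sign_neg]
  have hfwd := hloses σ ha hσ
  have hbwd := hloses (-σ) (by simpa using ha) fun i j hij hpos => by
    simp only [Pi.neg_apply, hσ i j hij hpos]
  linarith [LPobj_alternatingShift_add_neg (Adj := Adj) (w := w) P σ, LPobj_congr (w := w) hPx]

end MatchingRelaxation

section HalfIntegral

variable {V : Type*} [Fintype V] {Adj : V → V → Prop} [DecidableRel Adj] {x : V → V → ℝ}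
  {i j k l : V}

lemma IsHalfIntegral.half_le_of_pos {V : Type*} {Adj : V → V → Prop} {x : V → V → ℝ} {i j : V}
    (hx : IsHalfIntegral Adj x) (hij : Adj i j) (hpos : 0 < x i j) : 1 / 2 ≤ x i j := by
  rcases hx i j hij with h | h | h <;> linarith

lemma LPFeasible.sum_le_one (hx : LPFeasible Adj x) {s : Finset V} (hs : ∀ j ∈ s, Adj i j) :
    ∑ j ∈ s, x i j ≤ 1 :=
  (sum_le_sum_of_subset_of_nonneg (fun j hj => mem_filter.2 ⟨mem_univ j, hs j hj⟩)
    fun j hj _ => hx.2.1 i j (mem_filter.1 hj).2).trans (hx.2.2 i)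

lemma LPFeasible.add_le_one (hx : LPFeasible Adj x) (hij : Adj i j) (hik : Adj i k) (hjk : j ≠ k) :
    x i j + x i k ≤ 1 := by
  classical
  rw [← sum_pair hjk]
  exact hx.sum_le_one (by simp [hij, hik])

lemma LPFeasible.eq_or_eq_of_pos (hx : LPFeasible Adj x) (hhalf : IsHalfIntegral Adj x)
    (hij : Adj i j) (hik : Adj i k) (hil : Adj i l) (hjk : j ≠ k) (hxj : 0 < x i j)
    (hxk : 0 < x i k) (hxl : 0 < x i l) : l = j ∨ l = k := by
  classical
  by_contra! hne
  have hle := hx.sum_le_one (i := i) (s := {l, j, k}) (by simp [hij, hik, hil])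
  rw [sum_insert (by simp [hne]), sum_pair hjk] at hle
  linarith [hhalf.half_le_of_pos hij hxj, hhalf.half_le_of_pos hik hxk,
    hhalf.half_le_of_pos hil hxl]

lemma LPFeasible.eq_half_of_pos (hx : LPFeasible Adj x) (hhalf : IsHalfIntegral Adj x)
    (hij : Adj i j) (hik : Adj i k) (hjk : j ≠ k) (hxj : 0 < x i j) (hxk : 0 < x i k) :
    x i j = 1 / 2 := by
  linarith [hx.add_le_one hij hik hjk, hhalf.half_le_of_pos hij hxj, hhalf.half_le_of_pos hik hxk]

lemma exists_pos_ne_of_sum_eq_one (hsum : ∑ k with Adj i k, x i k = 1) (hij : Adj i j)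
    (hlt : x i j < 1) : ∃ k, k ≠ j ∧ Adj i k ∧ 0 < x i k := by
  classical
  have hj : j ∈ ({k | Adj i k} : Finset V) := by simpa using hij
  rw [← add_sum_erase _ _ hj] at hsum
  obtain ⟨k, hk, hpos⟩ : ∃ k ∈ ({k | Adj i k} : Finset V).erase j, 0 < x i k :=
    exists_lt_of_sum_lt (by rw [sum_const_zero]; linarith)
  exact ⟨k, ne_of_mem_erase hk, by simpa using mem_of_mem_erase hk, hpos⟩

end HalfIntegral

section Equilibrium

variable {V : Type*} {w α : V → V → ℝ} {i j k : V}

/-- The value `w_{ij} − α_{i→j} − α_{j→i}` left on an edge by the best alternatives of its ends: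
the edge is strong-dotted if it is positive, weak-dotted if it is zero, non-dotted otherwise. -/
def surplus (w α : V → V → ℝ) (i j : V) : ℝ := w i j - α i j - α j i

lemma surplus_comm (hw : ∀ i j, w i j = w j i) (i j : V) : surplus w α i j = surplus w α j i := by
  rw [surplus, surplus, hw, sub_right_comm]

lemma offer_eq_of_surplus_nonpos (h : surplus w α i j ≤ 0) :
    offer w α i j = max (w i j - α i j) 0 := by
  rw [offer, show w i j - α i j - α j i = surplus w α i j from rfl, max_eq_right h, mul_zero,
    sub_zero]

lemma offer_eq_of_surplus_nonneg (h : 0 ≤ surplus w α i j) (hα : 0 ≤ α j i) :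
    offer w α i j = α j i + surplus w α i j / 2 := by
  rw [offer, show w i j - α i j - α j i = surplus w α i j from rfl, max_eq_left h, max_eq_left]
  all_goals
    unfold surplus at *
    linarith

variable [Fintype V] {Adj : V → V → Prop} [DecidableRel Adj]

lemma earn_nonneg (i : V) : 0 ≤ earn Adj w α i :=
  (le_fold_max _).2 (Or.inl le_rfl)

variable [DecidableEq V]

/-- The fixed-point equation freed of the damping factor. -/
def IsEquilibrium (Adj : V → V → Prop) [DecidableRel Adj] (w α : V → V → ℝ) : Prop :=
  ∀ i j, Adj i j → bestAlt Adj w α i j = α i j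

lemma IsFixedPoint.isEquilibrium {κ : ℝ} (hκ : κ ≠ 0) (h : IsFixedPoint Adj w κ α) :
    IsEquilibrium Adj w α := by
  intro i j hij
  have hstep := h i j hij
  rw [step] at hstep
  exact mul_left_cancel₀ hκ (by linarith)

lemma earn_eq_max_bestAlt_offer (hij : Adj i j) :
    earn Adj w α i = max (bestAlt Adj w α i j) (offer w α j i) := by
  have hinsert : ({k | Adj i k} : Finset V) = insert j ({k | Adj i k ∧ k ≠ j} : Finset V) := by
    ext k
    by_cases hk : k = j <;> simp [hk, hij]
  rw [earn, hinsert, fold_insert (by simp), max_comm, bestAlt]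

namespace IsEquilibrium

lemma nonneg (hα : IsEquilibrium Adj w α) (hij : Adj i j) : 0 ≤ α i j := by
  rw [← hα i j hij]
  exact (le_fold_max _).2 (Or.inl le_rfl)

lemma offer_le (hα : IsEquilibrium Adj w α) (hij : Adj i j) (hik : Adj i k) (hkj : k ≠ j) :
    offer w α k i ≤ α i j := by
  rw [← hα i j hij]
  exact (le_fold_max _).2 (Or.inr ⟨k, by simp [hik, hkj], le_rfl⟩)

lemma exists_le_offer (hα : IsEquilibrium Adj w α) (hij : Adj i j) (hpos : 0 < α i j) :
    ∃ k, k ≠ j ∧ Adj i k ∧ α i j ≤ offer w α k i := by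
  rcases (le_fold_max _).1 (hα i j hij).ge with h | ⟨k, hk, hle⟩
  · exact absurd h hpos.not_ge
  · obtain ⟨-, hik, hkj⟩ := mem_filter.1 hk
    exact ⟨k, hkj, hik, hle⟩

lemma le_earn (hα : IsEquilibrium Adj w α) (hij : Adj i j) : α i j ≤ earn Adj w α i := by
  rw [earn_eq_max_bestAlt_offer hij, hα i j hij]
  exact le_max_left _ _

lemma earn_eq_of_surplus_nonpos (hα : IsEquilibrium Adj w α) (hw : ∀ i j, w i j = w j i)
    (hij : Adj i j) (h : surplus w α i j ≤ 0) : earn Adj w α i = α i j := by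
  have hoffer : offer w α j i ≤ α i j := by
    rw [offer_eq_of_surplus_nonpos (surplus_comm hw i j ▸ h), hw j i]
    unfold surplus at h
    exact max_le (by linarith) (hα.nonneg hij)
  rw [earn_eq_max_bestAlt_offer hij, hα i j hij, max_eq_left hoffer]

lemma offer_eq (hα : IsEquilibrium Adj w α) (hw : ∀ i j, w i j = w j i) (hij : Adj i j)
    (h : 0 ≤ surplus w α i j) : offer w α j i = α i j + surplus w α i j / 2 := by
  rw [surplus_comm hw] at h ⊢
  exact offer_eq_of_surplus_nonneg h (hα.nonneg hij)

lemma earn_add_earn_eq (hα : IsEquilibrium Adj w α) (hadj : ∀ i j, Adj i j → Adj j i)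
    (hw : ∀ i j, w i j = w j i) (hij : Adj i j) (h : 0 ≤ surplus w α i j) :
    earn Adj w α i + earn Adj w α j = w i j := by
  have hearn : ∀ i j, Adj i j → 0 ≤ surplus w α i j →
      earn Adj w α i = α i j + surplus w α i j / 2 := fun i j hij h => by
    rw [earn_eq_max_bestAlt_offer hij, hα i j hij, hα.offer_eq hw hij h, max_eq_right (by linarith)]
  rw [hearn i j hij h, hearn j i (hadj i j hij) (surplus_comm hw i j ▸ h), ← surplus_comm hw i j,
    surplus]
  ring

lemma lt_earn_add_earn (hα : IsEquilibrium Adj w α) (hadj : ∀ i j, Adj i j → Adj j i)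
    (hij : Adj i j) (h : surplus w α i j < 0) : w i j < earn Adj w α i + earn Adj w α j := by
  unfold surplus at h
  linarith [hα.le_earn hij, hα.le_earn (hadj i j hij)]

lemma eq_of_surplus_pos_of_surplus_nonneg (hα : IsEquilibrium Adj w α) (hw : ∀ i j, w i j = w j i)
    (hij : Adj i j) (hik : Adj i k) (hj : 0 < surplus w α i j) (hk : 0 ≤ surplus w α i k) :
    k = j := by
  by_contra hkj
  have hle := hα.offer_le hij hik hkj
  have hge := hα.offer_le hik hij (Ne.symm hkj)
  rw [hα.offer_eq hw hik hk] at hle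
  rw [hα.offer_eq hw hij hj.le] at hge
  linarith

/-- The alternative that sets `α i j` is itself a dotted edge: on a non-dotted edge the offer would
be too low. -/
lemma exists_ne_surplus_nonneg (hα : IsEquilibrium Adj w α) (hw : ∀ i j, w i j = w j i)
    (hij : Adj i j) (hearn : 0 < earn Adj w α i) (h : surplus w α i j ≤ 0) :
    ∃ k, k ≠ j ∧ Adj i k ∧ 0 ≤ surplus w α i k := by
  have hearn_j := hα.earn_eq_of_surplus_nonpos hw hij h
  obtain ⟨k, hkj, hik, hle⟩ := hα.exists_le_offer hij (hearn_j ▸ hearn)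
  refine ⟨k, hkj, hik, ?_⟩
  by_contra! hk
  have hearn_k := hα.earn_eq_of_surplus_nonpos hw hik hk.le
  have hlow : offer w α k i < α i k := by
    rw [offer_eq_of_surplus_nonpos (surplus_comm hw i k ▸ hk.le), hw k i]
    unfold surplus at hk
    exact max_lt (by linarith) (hearn_k ▸ hearn)
  linarith

end IsEquilibrium

end Equilibrium

section MaximumPrinciple

variable {V : Type*} [Fintype V] {Adj : V → V → Prop} [DecidableRel Adj] {w x α : V → V → ℝ}
  {y : V → ℝ} {i j l p : V}

/-- The amount by which the earnings at the fixed point exceed the dual price of a node. -/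
noncomputable def excess (Adj : V → V → Prop) [DecidableRel Adj] (w α : V → V → ℝ) (y : V → ℝ)
    (i : V) : ℝ :=
  earn Adj w α i - y i

/-- A node on an edge that carries mass without being strong-dotted. -/
def IsExposedNode (Adj : V → V → Prop) (w x α : V → V → ℝ) (i : V) : Prop :=
  ∃ j, Adj i j ∧ 0 < x i j ∧ surplus w α i j ≤ 0

/-- A positive maximum of the excess over the exposed nodes. -/
structure IsPeak (Adj : V → V → Prop) [DecidableRel Adj] (w x : V → V → ℝ) (y : V → ℝ)
    (α : V → V → ℝ) (l : V) : Prop where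
  exposed : IsExposedNode Adj w x α l
  excess_pos : 0 < excess Adj w α y l
  excess_le : ∀ q, IsExposedNode Adj w x α q → excess Adj w α y q ≤ excess Adj w α y l

lemma dual_pos_of_excess_neg (hneg : excess Adj w α y i < 0) : 0 < y i := by
  unfold excess at hneg
  linarith [earn_nonneg (Adj := Adj) (w := w) (α := α) i]

variable [DecidableEq V]

/-- The setting of the maximum principle: an equilibrium `α` of the dynamics, to be compared with a
strictly complementary dual optimum `y` of a pointed relaxation. -/
structure IsEquilibriumWithDual (Adj : V → V → Prop) [DecidableRel Adj] (w x : V → V → ℝ)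
    (y : V → ℝ) (α : V → V → ℝ) : Prop where
  adj_symm : ∀ i j, Adj i j → Adj j i
  weight_symm : ∀ i j, w i j = w j i
  pointed : IsPointedOptimum Adj w x
  dual : IsStrictDual Adj w x y
  equilibrium : IsEquilibrium Adj w α

namespace IsEquilibriumWithDual

lemma pos_symm (h : IsEquilibriumWithDual Adj w x y α) (hpos : 0 < x i j) : 0 < x j i :=
  h.pointed.feasible.1 i j ▸ hpos

lemma surplus_symm (h : IsEquilibriumWithDual Adj w x y α) (i j : V) :
    surplus w α i j = surplus w α j i :=
  surplus_comm h.weight_symm i j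

lemma excess_add_eq_zero (h : IsEquilibriumWithDual Adj w x y α) (hij : Adj i j)
    (hpos : 0 < x i j) (hdot : 0 ≤ surplus w α i j) :
    excess Adj w α y i + excess Adj w α y j = 0 := by
  unfold excess
  linarith [h.equilibrium.earn_add_earn_eq h.adj_symm h.weight_symm hij hdot,
    h.dual.add_eq_of_pos i j hij hpos]

lemma excess_add_pos (h : IsEquilibriumWithDual Adj w x y α) (hij : Adj i j)
    (hpos : 0 < x i j) (hneg : surplus w α i j < 0) :
    0 < excess Adj w α y i + excess Adj w α y j := by
  unfold excess
  linarith [h.equilibrium.lt_earn_add_earn h.adj_symm hij hneg,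
    h.dual.add_eq_of_pos i j hij hpos]

lemma excess_add_nonneg (h : IsEquilibriumWithDual Adj w x y α) (hij : Adj i j)
    (hpos : 0 < x i j) : 0 ≤ excess Adj w α y i + excess Adj w α y j :=
  (lt_or_ge (surplus w α i j) 0).elim (fun hneg => (h.excess_add_pos hij hpos hneg).le)
    fun hdot => (h.excess_add_eq_zero hij hpos hdot).ge

lemma excess_add_neg (h : IsEquilibriumWithDual Adj w x y α) (hij : Adj i j)
    (h0 : x i j = 0) (hdot : 0 ≤ surplus w α i j) :
    excess Adj w α y i + excess Adj w α y j < 0 := by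
  unfold excess
  linarith [h.equilibrium.earn_add_earn_eq h.adj_symm h.weight_symm hij hdot,
    h.dual.lt_add_of_eq_zero i j hij h0]

lemma exists_pos_ne (h : IsEquilibriumWithDual Adj w x y α) (hij : Adj i j) (hlt : x i j < 1)
    (hy : 0 < y i) : ∃ k, k ≠ j ∧ Adj i k ∧ 0 < x i k :=
  exists_pos_ne_of_sum_eq_one (h.dual.sum_eq_one_of_pos i hy) hij hlt

lemma earn_pos_of_excess_pos (h : IsEquilibriumWithDual Adj w x y α)
    (hpos : 0 < excess Adj w α y i) : 0 < earn Adj w α i := by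
  unfold excess at hpos
  linarith [h.dual.nonneg i]

lemma exists_ne_surplus_nonpos_of_excess_neg (h : IsEquilibriumWithDual Adj w x y α)
    (hij : Adj i j) (hlt : x i j < 1) (hdot : 0 ≤ surplus w α i j)
    (hneg : excess Adj w α y i < 0) :
    ∃ k, k ≠ j ∧ Adj i k ∧ 0 < x i k ∧ surplus w α i k ≤ 0 := by
  obtain ⟨k, hkj, hik, hpos⟩ := h.exists_pos_ne hij hlt (dual_pos_of_excess_neg hneg)
  refine ⟨k, hkj, hik, hpos, ?_⟩
  by_contra! hk
  exact hkj (h.equilibrium.eq_of_surplus_pos_of_surplus_nonneg h.weight_symm hik hij hk hdot).symm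

lemma isExposedNode_right (h : IsEquilibriumWithDual Adj w x y α) (hij : Adj i j) (hpos : 0 < x i j)
    (hle : surplus w α i j ≤ 0) : IsExposedNode Adj w x α j :=
  ⟨i, h.adj_symm i j hij, h.pos_symm hpos, h.surplus_symm i j ▸ hle⟩

/-- Otherwise the excess of `p` is below `-excess l`, so a second edge at `p` leads to an exposed
node with excess above that of the peak. -/
lemma pos_of_isPeak (h : IsEquilibriumWithDual Adj w x y α)
    (hl : IsPeak Adj w x y α l) (hlp : Adj l p) (hdot : 0 ≤ surplus w α l p) : 0 < x l p := by
  refine (h.pointed.feasible.2.1 l p hlp).lt_of_ne' fun h0 => ?_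
  have hlp_neg := h.excess_add_neg hlp h0 hdot
  obtain ⟨q, -, hpq, hpos, hle⟩ := h.exists_ne_surplus_nonpos_of_excess_neg (h.adj_symm l p hlp)
    (by rw [← h.pointed.feasible.1, h0]; exact one_pos) (h.surplus_symm l p ▸ hdot)
    (by linarith [hl.excess_pos])
  linarith [h.excess_add_nonneg hpq hpos, hl.excess_le q (h.isExposedNode_right hpq hpos hle)]

lemma surplus_nonpos_of_isPeak (h : IsEquilibriumWithDual Adj w x y α)
    (hl : IsPeak Adj w x y α l) (hlp : Adj l p) : surplus w α l p ≤ 0 := by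
  by_contra! hstrong
  obtain ⟨j, hlj, hxj, hj⟩ := hl.exposed
  have hpos := h.pos_of_isPeak hl hlp hstrong.le
  have hpj : p ≠ j := fun hpj => (hpj ▸ hstrong).not_ge hj
  have hhalf := h.pointed.feasible.eq_half_of_pos h.pointed.halfIntegral hlp hlj hpj hpos hxj
  have hlp_zero := h.excess_add_eq_zero hlp hpos hstrong.le
  have hpl := h.adj_symm l p hlp
  obtain ⟨q, hql, hpq, hxq⟩ := h.exists_pos_ne hpl
    (by rw [← h.pointed.feasible.1, hhalf]; norm_num)
    (dual_pos_of_excess_neg (by linarith [hl.excess_pos] : excess Adj w α y p < 0))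
  have hq : surplus w α p q < 0 := by
    by_contra! hdot
    exact hql (h.equilibrium.eq_of_surplus_pos_of_surplus_nonneg h.weight_symm hpl hpq
      (h.surplus_symm l p ▸ hstrong) hdot)
  linarith [h.excess_add_pos hpq hxq hq, hl.excess_le q (h.isExposedNode_right hpq hxq hq.le)]

lemma exists_ne_surplus_nonneg_of_isPeak (h : IsEquilibriumWithDual Adj w x y α)
    (hl : IsPeak Adj w x y α l) (hlj : Adj l j) :
    ∃ k, k ≠ j ∧ Adj l k ∧ 0 < x l k ∧ 0 ≤ surplus w α l k := by
  obtain ⟨k, hkj, hlk, hdot⟩ := h.equilibrium.exists_ne_surplus_nonneg h.weight_symm hlj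
    (h.earn_pos_of_excess_pos hl.excess_pos) (h.surplus_nonpos_of_isPeak hl hlj)
  exact ⟨k, hkj, hlk, h.pos_of_isPeak hl hlk hdot, hdot⟩

lemma eq_half_of_isPeak (h : IsEquilibriumWithDual Adj w x y α) (hl : IsPeak Adj w x y α l)
    (hlp : Adj l p) (hpos : 0 < x l p) : x l p = 1 / 2 := by
  obtain ⟨k, hkp, hlk, hxk, -⟩ := h.exists_ne_surplus_nonneg_of_isPeak hl hlp
  exact h.pointed.feasible.eq_half_of_pos h.pointed.halfIntegral hlp hlk hkp.symm hpos hxk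

lemma surplus_nonneg_of_isPeak (h : IsEquilibriumWithDual Adj w x y α)
    (hl : IsPeak Adj w x y α l) (hlp : Adj l p) (hpos : 0 < x l p) : 0 ≤ surplus w α l p := by
  obtain ⟨k, hkp, hlk, hxk, -⟩ := h.exists_ne_surplus_nonneg_of_isPeak hl hlp
  obtain ⟨m, hmk, hlm, hxm, hdot⟩ := h.exists_ne_surplus_nonneg_of_isPeak hl hlk
  have hm := h.pointed.feasible.eq_or_eq_of_pos h.pointed.halfIntegral hlp hlk hlm hkp.symm hpos
    hxk hxm
  exact hm.resolve_right hmk ▸ hdot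

lemma excess_add_eq_zero_of_isPeak (h : IsEquilibriumWithDual Adj w x y α)
    (hl : IsPeak Adj w x y α l) (hlp : Adj l p) (hpos : 0 < x l p) :
    excess Adj w α y l + excess Adj w α y p = 0 :=
  h.excess_add_eq_zero hlp hpos (h.surplus_nonneg_of_isPeak hl hlp hpos)

lemma isPeak_of_isPeak (h : IsEquilibriumWithDual Adj w x y α) (hl : IsPeak Adj w x y α l)
    (hlp : Adj l p) (hxp : 0 < x l p) (hpq : Adj p q) (hxq : 0 < x p q) :
    IsPeak Adj w x y α q := by
  have hlp_zero := h.excess_add_eq_zero_of_isPeak hl hlp hxp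
  rcases eq_or_ne q l with rfl | hql
  · exact hl
  have hle : surplus w α p q ≤ 0 := by
    by_contra! hstrong
    exact hql (h.equilibrium.eq_of_surplus_pos_of_surplus_nonneg h.weight_symm hpq
      (h.adj_symm l p hlp) hstrong
      (h.surplus_symm l p ▸ h.surplus_nonneg_of_isPeak hl hlp hxp)).symm
  have hq := h.isExposedNode_right hpq hxq hle
  have heq : excess Adj w α y q = excess Adj w α y l :=
    (hl.excess_le q hq).antisymm (by linarith [h.excess_add_nonneg hpq hxq])
  exact ⟨hq, heq ▸ hl.excess_pos, heq ▸ hl.excess_le⟩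

/-- The excess, restricted to the peaks and their partners, is in the kernel of
`IsPointedOptimum.eq_zero_of_add_eq_zero`. -/
lemma not_isPeak (h : IsEquilibriumWithDual Adj w x y α) (l : V) : ¬IsPeak Adj w x y α l := by
  intro hl
  let S : Set V := {i | IsPeak Adj w x y α i ∨ ∃ l, IsPeak Adj w x y α l ∧ Adj l i ∧ 0 < x l i}
  have hclosed : ∀ i j, Adj i j → 0 < x i j → i ∈ S →
      j ∈ S ∧ excess Adj w α y i + excess Adj w α y j = 0 := by
    rintro i j hij hpos (hi | ⟨l, hl, hli, hxi⟩)
    · exact ⟨Or.inr ⟨i, hi, hij, hpos⟩, h.excess_add_eq_zero_of_isPeak hi hij hpos⟩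
    · have hj := h.isPeak_of_isPeak hl hli hxi hij hpos
      refine ⟨Or.inl hj, ?_⟩
      rw [add_comm]
      exact h.excess_add_eq_zero_of_isPeak hj (h.adj_symm i j hij) (h.pos_symm hpos)
  have hkernel : ∀ i j, Adj i j → 0 < x i j →
      S.indicator (excess Adj w α y) i + S.indicator (excess Adj w α y) j = 0 := by
    intro i j hij hpos
    by_cases hi : i ∈ S
    · obtain ⟨hj, hsum⟩ := hclosed i j hij hpos hi
      rw [Set.indicator_of_mem hi, Set.indicator_of_mem hj, hsum]
    · have hj : j ∉ S := fun hj => hi (hclosed j i (h.adj_symm i j hij) (h.pos_symm hpos) hj).1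
      rw [Set.indicator_of_notMem hi, Set.indicator_of_notMem hj, add_zero]
  obtain ⟨p, hlp, hpos, -⟩ := hl.exposed
  have hzero := h.pointed.eq_zero_of_add_eq_zero h.adj_symm h.weight_symm hkernel hlp
    (h.eq_half_of_isPeak hl hlp hpos)
  rw [Set.indicator_of_mem (show l ∈ S from Or.inl hl)] at hzero
  exact hl.excess_pos.ne' hzero

lemma excess_nonpos_of_isExposedNode (h : IsEquilibriumWithDual Adj w x y α)
    (hi : IsExposedNode Adj w x α i) : excess Adj w α y i ≤ 0 := by
  classical
  by_contra! hpos
  obtain ⟨l, hl, hmax⟩ := exists_max_image ({q | IsExposedNode Adj w x α q} : Finset V)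
    (excess Adj w α y) ⟨i, by simpa using hi⟩
  simp only [mem_filter, mem_univ, true_and] at hl hmax
  exact h.not_isPeak l ⟨hl, hpos.trans_le (hmax i hi), hmax⟩

lemma excess_eq_zero_of_surplus_nonpos (h : IsEquilibriumWithDual Adj w x y α) (hij : Adj i j)
    (hpos : 0 < x i j) (hle : surplus w α i j ≤ 0) : excess Adj w α y i = 0 := by
  have hi := h.excess_nonpos_of_isExposedNode ⟨j, hij, hpos, hle⟩
  have hj := h.excess_nonpos_of_isExposedNode (h.isExposedNode_right hij hpos hle)
  linarith [h.excess_add_nonneg hij hpos]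

lemma surplus_nonneg_of_pos (h : IsEquilibriumWithDual Adj w x y α) (hij : Adj i j)
    (hpos : 0 < x i j) : 0 ≤ surplus w α i j := by
  by_contra! hneg
  have hi := h.excess_nonpos_of_isExposedNode ⟨j, hij, hpos, hneg.le⟩
  have hj := h.excess_nonpos_of_isExposedNode (h.isExposedNode_right hij hpos hneg.le)
  linarith [h.excess_add_pos hij hpos hneg]

lemma earn_eq_zero_of_eq_one (h : IsEquilibriumWithDual Adj w x y α) (hij : Adj i j)
    (hone : x i j = 1) (hle : surplus w α i j ≤ 0) : earn Adj w α i = 0 := by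
  by_contra hne
  obtain ⟨k, hkj, hik, hdot⟩ := h.equilibrium.exists_ne_surplus_nonneg h.weight_symm hij
    ((earn_nonneg i).lt_of_ne' hne) hle
  have hxik : x i k = 0 := by
    linarith [h.pointed.feasible.add_le_one hij hik hkj.symm, h.pointed.feasible.2.1 i k hik]
  have hk : excess Adj w α y k < 0 := by
    linarith [h.excess_add_neg hik hxik hdot,
      h.excess_eq_zero_of_surplus_nonpos hij (hone ▸ one_pos) hle]
  obtain ⟨q, -, hkq, hpos, hq⟩ := h.exists_ne_surplus_nonpos_of_excess_neg (h.adj_symm i k hik)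
    (by rw [← h.pointed.feasible.1, hxik]; exact one_pos) (h.surplus_symm i k ▸ hdot) hk
  exact hk.ne (h.excess_eq_zero_of_surplus_nonpos hkq hpos hq)

lemma dual_eq_zero_of_eq_half (h : IsEquilibriumWithDual Adj w x y α) (hij : Adj i j)
    (hhalf : x i j = 1 / 2) (hstrong : 0 < surplus w α i j) : y i = 0 := by
  by_contra hne
  obtain ⟨k, hkj, hik, hpos⟩ := h.exists_pos_ne hij (by rw [hhalf]; norm_num)
    ((h.dual.nonneg i).lt_of_ne' hne)
  exact hkj (h.equilibrium.eq_of_surplus_pos_of_surplus_nonneg h.weight_symm hij hik hstrong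
    (h.surplus_nonneg_of_pos hik hpos))

theorem surplus_pos_of_eq_one (h : IsEquilibriumWithDual Adj w x y α) (hij : Adj i j)
    (hone : x i j = 1) : 0 < surplus w α i j := by
  by_contra! hle
  have hpos : 0 < x i j := hone ▸ one_pos
  have hi := h.earn_eq_zero_of_eq_one hij hone hle
  have hj := h.earn_eq_zero_of_eq_one (h.adj_symm i j hij) (h.pointed.feasible.1 i j ▸ hone)
    (h.surplus_symm i j ▸ hle)
  have hsum := h.equilibrium.earn_add_earn_eq h.adj_symm h.weight_symm hij
    (h.surplus_nonneg_of_pos hij hpos)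
  linarith [h.pointed.weight_pos_of_pos h.weight_symm hij hpos]

theorem surplus_eq_zero_of_eq_half (h : IsEquilibriumWithDual Adj w x y α) (hij : Adj i j)
    (hhalf : x i j = 1 / 2) : surplus w α i j = 0 := by
  have hpos : 0 < x i j := hhalf ▸ one_half_pos
  refine ((h.surplus_nonneg_of_pos hij hpos).eq_or_lt').resolve_right fun hstrong => ?_
  have hi := h.dual_eq_zero_of_eq_half hij hhalf hstrong
  have hj := h.dual_eq_zero_of_eq_half (h.adj_symm i j hij) (h.pointed.feasible.1 i j ▸ hhalf)
    (h.surplus_symm i j ▸ hstrong)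
  linarith [h.dual.add_eq_of_pos i j hij hpos,
    h.pointed.weight_pos_of_pos h.weight_symm hij hpos]

end IsEquilibriumWithDual

end MaximumPrinciple

theorem stmt15_general {V : Type*} [Fintype V] [DecidableEq V] {Adj : V → V → Prop}
    [DecidableRel Adj] {w xstar α : V → V → ℝ} {κ : ℝ} (hadj : ∀ i j, Adj i j → Adj j i)
    (hw : ∀ i j, w i j = w j i) (hx : IsPointedOptimum Adj w xstar) (hκ : κ ≠ 0)
    (hfp : IsFixedPoint Adj w κ α) :
    ∀ i j, Adj i j →
      (xstar i j = 1 → 0 < w i j - α i j - α j i) ∧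
      (xstar i j = 1 / 2 → w i j - α i j - α j i = 0) := by
  obtain ⟨y, hy⟩ := hx.exists_isStrictDual hadj hw
  have h : IsEquilibriumWithDual Adj w xstar y α := ⟨hadj, hw, hx, hy, hfp.isEquilibrium hκ⟩
  exact fun i j hij => ⟨h.surplus_pos_of_eq_one hij, h.surplus_eq_zero_of_eq_half hij⟩

/-- If the LP relaxation is pointed, then at any fixed point of the natural dynamics
every 1-solid edge is strong-dotted and every ½-solid edge is weak-dotted. -/
theorem stmt15 {V : Type*} [Fintype V] [DecidableEq V]
    (Adj : V → V → Prop) [DecidableRel Adj] (w : V → V → ℝ)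
    (hG : GoodGraph Adj w) (κ : ℝ) (hκ : κ ∈ Set.Ioo (0 : ℝ) 1)
    (xstar : V → V → ℝ) (hfeas : LPFeasible Adj xstar)
    (hhalf : ∀ i j, Adj i j → xstar i j = 0 ∨ xstar i j = 1 / 2 ∨ xstar i j = 1)
    (ε : ℝ) (hε : 0 < ε)
    (hopt : ∀ x, LPFeasible Adj x → LPobj Adj w x ≤ LPobj Adj w xstar)
    (hgap : ∀ x, LPFeasible Adj x →
      (∀ i j, Adj i j → x i j = 0 ∨ x i j = 1 / 2 ∨ x i j = 1) →
      (∃ i j, Adj i j ∧ x i j ≠ xstar i j) →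
      LPobj Adj w x + ε ≤ LPobj Adj w xstar)
    (α : V → V → ℝ) (hnn : ∀ i j, Adj i j → 0 ≤ α i j)
    (hfp : IsFixedPoint Adj w κ α) :
    ∀ i j, Adj i j →
      (xstar i j = 1 → 0 < w i j - α i j - α j i) ∧
      (xstar i j = 1 / 2 → w i j - α i j - α j i = 0) := by
  exact stmt15_general hG.1 hG.2.2.1 ⟨hfeas, hhalf, ε, hε, hgap⟩ hκ.1.ne' hfp
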